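/- (Lemma 3, second identity: 𝒫(S(P,ε), P, ε) = 1.) Fix P > 0 and ε > 0. Suppose the supremum defining S(P, ε) is attained at some feasible point and S(P, ε) > 0. Then 𝒫(S(P, ε), P, ε) = 1. -/

import Mathlib

open Matrix Finset

noncomputable section

/-- `SINR_k(f) = |h_kᴴ f_k|² / (∑_{j≠k} |h_kᴴ f_j|² + σ²)`. -/
def SINR {Nt K : ℕ} (h : Fin K → Fin Nt → ℂ) (σ2 : ℝ)
    (f : Fin K → Fin Nt → ℂ) (k : Fin K) : ℝ :=
  ‖star (h k) ⬝ᵥ f k‖ ^ 2 /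
    ((∑ j ∈ Finset.univ.erase k, ‖star (h k) ⬝ᵥ f j‖ ^ 2) + σ2)

/-- `power(f) = ∑_k ‖f_k‖²`. -/
def power {Nt K : ℕ} (f : Fin K → Fin Nt → ℂ) : ℝ := ∑ k, ∑ i, ‖f k i‖ ^ 2

/-- `g(f) = ∑_k |aᵀ f_k|²`. -/
def gfun {Nt K : ℕ} (a : Fin Nt → ℂ) (f : Fin K → Fin Nt → ℂ) : ℝ :=
  ∑ k, ‖a ⬝ᵥ f k‖ ^ 2

/-- The CRLB `C(q) = tr((Λ (q D) Λᵀ)⁻¹)`. -/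
def Cq {N : ℕ} (Λ : Matrix (Fin 2) (Fin N) ℝ)
    (D : Matrix (Fin N) (Fin N) ℝ) (q : ℝ) : ℝ :=
  ((Λ * (q • D) * Λᵀ)⁻¹).trace

/-- Value set of the max-min-SINR problem `S(P, ε)`. -/
def Sfeas {Nt K N : ℕ} (h : Fin K → Fin Nt → ℂ) (a : Fin Nt → ℂ) (σ2 : ℝ)
    (Λ : Matrix (Fin 2) (Fin N) ℝ) (D : Matrix (Fin N) (Fin N) ℝ)
    (P ε : ℝ) : Set ℝ :=
  {v | ∃ f : Fin K → Fin Nt → ℂ, power f ≤ P ∧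
        (∃ q : ℝ, 0 < q ∧ q ≤ gfun a f ∧ Cq Λ D q ≤ ε) ∧
        v = ⨅ k, SINR h σ2 f k}

/-- `S(P, ε)`: the optimal value of the max-min-SINR problem. -/
def Sval {Nt K N : ℕ} (h : Fin K → Fin Nt → ℂ) (a : Fin Nt → ℂ) (σ2 : ℝ)
    (Λ : Matrix (Fin 2) (Fin N) ℝ) (D : Matrix (Fin N) (Fin N) ℝ)
    (P ε : ℝ) : ℝ :=
  sSup (Sfeas h a σ2 Λ D P ε)

/-- Value set of the power-minimization problem `𝒫(η, P, ε)`. -/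
def Pfeas {Nt K N : ℕ} (h : Fin K → Fin Nt → ℂ) (a : Fin Nt → ℂ) (σ2 : ℝ)
    (Λ : Matrix (Fin 2) (Fin N) ℝ) (D : Matrix (Fin N) (Fin N) ℝ)
    (η P ε : ℝ) : Set ℝ :=
  {v | ∃ f : Fin K → Fin Nt → ℂ, (∀ k, SINR h σ2 f k ≥ η) ∧
        (∃ q : ℝ, 0 < q ∧ q ≤ gfun a f ∧ Cq Λ D q ≤ ε) ∧
        v = power f / P}

/-- `𝒫(η, P, ε)`: the optimal value of the power-minimization problem. -/
def Pval {Nt K N : ℕ} (h : Fin K → Fin Nt → ℂ) (a : Fin Nt → ℂ) (σ2 : ℝ)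
    (Λ : Matrix (Fin 2) (Fin N) ℝ) (D : Matrix (Fin N) (Fin N) ℝ)
    (η P ε : ℝ) : ℝ :=
  sInf (Pfeas h a σ2 Λ D η P ε)

/-!
Multiplying all beamformers by a common `c` with `‖c‖ > 1` multiplies every signal and interference
power by `‖c‖ ^ 2` but leaves the noise power unchanged, so every positive SINR strictly increases,
while a satisfied CRLB constraint stays satisfied. Hence a beamformer that reaches the optimal
min-SINR with power below `P` could be scaled up to exceed that optimum within the budget: every
point feasible for the power problem at level `S(P, ε)` uses power at least `P`. A maximizer of the
min-SINR is such a point and uses power at most `P`, so the value is `P / P = 1`.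
-/

section Scaling

open scoped Topology

variable {Nt K N : ℕ} {h : Fin K → Fin Nt → ℂ} {a : Fin Nt → ℂ} {σ2 : ℝ}
  {Λ : Matrix (Fin 2) (Fin N) ℝ} {D : Matrix (Fin N) (Fin N) ℝ} {P ε : ℝ}
  {f : Fin K → Fin Nt → ℂ} {c : ℂ}

theorem power_smul (c : ℂ) (f : Fin K → Fin Nt → ℂ) : power (c • f) = ‖c‖ ^ 2 * power f := by
  simp [power, mul_pow, Finset.mul_sum]

theorem gfun_nonneg (a : Fin Nt → ℂ) (f : Fin K → Fin Nt → ℂ) : 0 ≤ gfun a f :=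
  Finset.sum_nonneg fun _ _ => sq_nonneg _

theorem gfun_smul (a : Fin Nt → ℂ) (c : ℂ) (f : Fin K → Fin Nt → ℂ) :
    gfun a (c • f) = ‖c‖ ^ 2 * gfun a f := by
  simp [gfun, mul_pow, Finset.mul_sum]

theorem SINR_smul (h : Fin K → Fin Nt → ℂ) (σ2 : ℝ) (c : ℂ) (f : Fin K → Fin Nt → ℂ) (k : Fin K) :
    SINR h σ2 (c • f) k = ‖c‖ ^ 2 * ‖star (h k) ⬝ᵥ f k‖ ^ 2 /
      (‖c‖ ^ 2 * (∑ j ∈ univ.erase k, ‖star (h k) ⬝ᵥ f j‖ ^ 2) + σ2) := by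
  simp only [SINR, Pi.smul_apply, dotProduct_smul, norm_smul, mul_pow, Finset.mul_sum]

theorem div_add_lt_mul_div_mul_add {𝕜 : Type*} [Field 𝕜] [LinearOrder 𝕜] [IsStrictOrderedRing 𝕜]
    {x y s u : 𝕜} (hx : 0 < x) (hy : 0 ≤ y) (hs : 0 < s) (hu : 1 < u) :
    x / (y + s) < u * x / (u * y + s) := by
  have : 0 < u := one_pos.trans hu
  rw [div_lt_div_iff₀ (by positivity) (by positivity)]
  calc x * (u * y + s) = u * x * y + x * s := by ring
    _ < u * x * y + u * x * s := by gcongr; exact lt_mul_of_one_lt_left hx hu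
    _ = u * x * (y + s) := by ring

theorem SINR_lt_SINR_smul (hσ2 : 0 < σ2) (hc : 1 < ‖c‖) {k : Fin K} (hk : 0 < SINR h σ2 f k) :
    SINR h σ2 f k < SINR h σ2 (c • f) k := by
  have interference_nonneg : 0 ≤ ∑ j ∈ univ.erase k, ‖star (h k) ⬝ᵥ f j‖ ^ 2 :=
    Finset.sum_nonneg fun _ _ => sq_nonneg _
  have signal_pos : 0 < ‖star (h k) ⬝ᵥ f k‖ ^ 2 :=
    (div_pos_iff_of_pos_right (by positivity)).1 hk
  rw [SINR_smul]
  exact div_add_lt_mul_div_mul_add signal_pos interference_nonneg hσ2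
    (one_lt_pow₀ hc two_ne_zero)

theorem iInf_SINR_lt_iInf_SINR_smul [Nonempty (Fin K)] (hσ2 : 0 < σ2) (hc : 1 < ‖c‖)
    (hf : ∀ k, 0 < SINR h σ2 f k) : ⨅ k, SINR h σ2 f k < ⨅ k, SINR h σ2 (c • f) k := by
  obtain ⟨k, hk⟩ := exists_eq_ciInf_of_finite (f := SINR h σ2 (c • f))
  calc ⨅ k, SINR h σ2 f k ≤ SINR h σ2 f k := ciInf_le (Set.finite_range _).bddBelow k
    _ < SINR h σ2 (c • f) k := SINR_lt_SINR_smul hσ2 hc (hf k)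
    _ = ⨅ k, SINR h σ2 (c • f) k := hk

/-- The sensing constraint `C(q) ≤ ε` for some `0 < q ≤ g(f)`, shared by the max-min-SINR and the
power-minimization problems. -/
def MeetsCRLB (a : Fin Nt → ℂ) (Λ : Matrix (Fin 2) (Fin N) ℝ) (D : Matrix (Fin N) (Fin N) ℝ)
    (ε : ℝ) (f : Fin K → Fin Nt → ℂ) : Prop :=
  ∃ q : ℝ, 0 < q ∧ q ≤ gfun a f ∧ Cq Λ D q ≤ ε

theorem MeetsCRLB.smul (hf : MeetsCRLB a Λ D ε f) (hc : 1 ≤ ‖c‖) :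
    MeetsCRLB a Λ D ε (c • f) := by
  obtain ⟨q, hq, hqg, hqε⟩ := hf
  refine ⟨q, hq, hqg.trans ?_, hqε⟩
  rw [gfun_smul]
  exact le_mul_of_one_le_left (gfun_nonneg a f) (one_le_pow₀ hc)

theorem exists_one_lt_norm_power_smul_lt (hf : power f < P) :
    ∃ c : ℂ, 1 < ‖c‖ ∧ power (c • f) < P := by
  have hcont : Continuous fun t : ℝ => power ((t : ℂ) • f) := by
    simp only [power_smul]
    fun_prop
  have hnear : ∀ᶠ t : ℝ in 𝓝[>] 1, power ((t : ℂ) • f) < P :=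
    ((hcont.tendsto' 1 (power f) (by simp)).eventually_lt_const hf).filter_mono nhdsWithin_le_nhds
  obtain ⟨t, htP, ht⟩ := (hnear.and self_mem_nhdsWithin).exists
  exact ⟨t, by simpa using lt_of_lt_of_le ht (le_abs_self t), htP⟩

end Scaling

section Boundedness

theorem norm_dotProduct_sq_le {ι R : Type*} [Fintype ι] [NonUnitalSeminormedRing R]
    (x y : ι → R) : ‖x ⬝ᵥ y‖ ^ 2 ≤ (∑ i, ‖x i‖ ^ 2) * ∑ i, ‖y i‖ ^ 2 :=
  calc ‖x ⬝ᵥ y‖ ^ 2 ≤ (∑ i, ‖x i‖ * ‖y i‖) ^ 2 := by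
        gcongr
        exact norm_sum_le_of_le _ fun i _ => norm_mul_le (x i) (y i)
    _ ≤ (∑ i, ‖x i‖ ^ 2) * ∑ i, ‖y i‖ ^ 2 := sum_mul_sq_le_sq_mul_sq _ _ _

variable {Nt K N : ℕ} {σ2 : ℝ}

theorem SINR_le (h : Fin K → Fin Nt → ℂ) (hσ2 : 0 < σ2) (f : Fin K → Fin Nt → ℂ) (k : Fin K) :
    SINR h σ2 f k ≤ (∑ i, ‖h k i‖ ^ 2) * power f / σ2 := by
  have signal_le : ‖star (h k) ⬝ᵥ f k‖ ^ 2 ≤ (∑ i, ‖h k i‖ ^ 2) * power f :=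
    calc ‖star (h k) ⬝ᵥ f k‖ ^ 2 ≤ (∑ i, ‖h k i‖ ^ 2) * ∑ i, ‖f k i‖ ^ 2 := by
          simpa using norm_dotProduct_sq_le (star (h k)) (f k)
      _ ≤ (∑ i, ‖h k i‖ ^ 2) * power f := by
          gcongr
          exact Finset.single_le_sum (f := fun k => ∑ i, ‖f k i‖ ^ 2)
            (fun _ _ => by positivity) (mem_univ k)
  have noise_le : σ2 ≤ (∑ j ∈ univ.erase k, ‖star (h k) ⬝ᵥ f j‖ ^ 2) + σ2 :=
    le_add_of_nonneg_left (Finset.sum_nonneg fun _ _ => sq_nonneg _)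
  exact div_le_div₀ ((sq_nonneg _).trans signal_le) signal_le hσ2 noise_le

theorem bddAbove_Sfeas [Nonempty (Fin K)] (h : Fin K → Fin Nt → ℂ) (a : Fin Nt → ℂ)
    (hσ2 : 0 < σ2) (Λ : Matrix (Fin 2) (Fin N) ℝ) (D : Matrix (Fin N) (Fin N) ℝ) (P ε : ℝ) :
    BddAbove (Sfeas h a σ2 Λ D P ε) := by
  obtain ⟨k⟩ := ‹Nonempty (Fin K)›
  refine ⟨(∑ i, ‖h k i‖ ^ 2) * P / σ2, ?_⟩
  rintro _ ⟨f, hfP, -, rfl⟩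
  calc ⨅ k, SINR h σ2 f k ≤ SINR h σ2 f k := ciInf_le (Set.finite_range _).bddBelow k
    _ ≤ (∑ i, ‖h k i‖ ^ 2) * power f / σ2 := SINR_le h hσ2 f k
    _ ≤ (∑ i, ‖h k i‖ ^ 2) * P / σ2 := by gcongr

end Boundedness

theorem le_power_of_forall_Sval_le_SINR {Nt K N : ℕ} [Nonempty (Fin K)]
    {h : Fin K → Fin Nt → ℂ} {a : Fin Nt → ℂ} {σ2 : ℝ} (hσ2 : 0 < σ2)
    {Λ : Matrix (Fin 2) (Fin N) ℝ} {D : Matrix (Fin N) (Fin N) ℝ} {P ε : ℝ}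
    (hSpos : 0 < Sval h a σ2 Λ D P ε) {f : Fin K → Fin Nt → ℂ}
    (hfS : ∀ k, Sval h a σ2 Λ D P ε ≤ SINR h σ2 f k) (hfε : MeetsCRLB a Λ D ε f) :
    P ≤ power f := by
  by_contra! hfP
  obtain ⟨c, hc, hcP⟩ := exists_one_lt_norm_power_smul_lt hfP
  have hle : ⨅ k, SINR h σ2 (c • f) k ≤ Sval h a σ2 Λ D P ε :=
    le_csSup (bddAbove_Sfeas h a hσ2 Λ D P ε) ⟨c • f, hcP.le, hfε.smul hc.le, rfl⟩
  have hlt : Sval h a σ2 Λ D P ε < ⨅ k, SINR h σ2 (c • f) k :=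
    (le_ciInf hfS).trans_lt
      (iInf_SINR_lt_iInf_SINR_smul hσ2 hc fun k => hSpos.trans_le (hfS k))
  exact hle.not_gt hlt

theorem P_of_S_eq_one_general {Nt K N : ℕ} (hK : 0 < K)
    (h : Fin K → Fin Nt → ℂ) (a : Fin Nt → ℂ) (σ2 : ℝ) (hσ2 : 0 < σ2)
    (Λ : Matrix (Fin 2) (Fin N) ℝ) (D : Matrix (Fin N) (Fin N) ℝ)
    (_hΛD : (Λ * D * Λᵀ).PosDef) (P ε : ℝ) (hP : 0 < P)
    (hattain : ∃ f : Fin K → Fin Nt → ℂ, power f ≤ P ∧ MeetsCRLB a Λ D ε f ∧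
        (⨅ k, SINR h σ2 f k) = Sval h a σ2 Λ D P ε)
    (hSpos : 0 < Sval h a σ2 Λ D P ε) :
    Pval h a σ2 Λ D (Sval h a σ2 Λ D P ε) P ε = 1 := by
  have : Nonempty (Fin K) := Fin.pos_iff_nonempty.1 hK
  obtain ⟨f, hfP, hfε, hfS⟩ := hattain
  have hSINR (k : Fin K) : Sval h a σ2 Λ D P ε ≤ SINR h σ2 f k :=
    hfS.ge.trans (ciInf_le (Set.finite_range _).bddBelow k)
  have power_eq : power f = P :=
    hfP.antisymm (le_power_of_forall_Sval_le_SINR hσ2 hSpos hSINR hfε)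
  have isLeast_one : IsLeast (Pfeas h a σ2 Λ D (Sval h a σ2 Λ D P ε) P ε) 1 := by
    refine ⟨⟨f, hSINR, hfε, by rw [power_eq, div_self hP.ne']⟩, ?_⟩
    rintro _ ⟨f', hf'S, hf'ε, rfl⟩
    exact (one_le_div hP).2 (le_power_of_forall_Sval_le_SINR hσ2 hSpos hf'S hf'ε)
  exact isLeast_one.csInf_eq

/-- Lemma 3, second identity: `𝒫(S(P,ε), P, ε) = 1`, assuming the supremum
defining `S(P,ε)` is attained at some feasible point and `S(P,ε) > 0`. -/
theorem P_of_S_eq_one {Nt K N : ℕ} (hK : 0 < K)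
    (h : Fin K → Fin Nt → ℂ) (a : Fin Nt → ℂ) (σ2 : ℝ) (hσ2 : 0 < σ2)
    (Λ : Matrix (Fin 2) (Fin N) ℝ) (D : Matrix (Fin N) (Fin N) ℝ)
    (hDdiag : D.IsDiag) (hDpd : D.PosDef) (hΛD : (Λ * D * Λᵀ).PosDef)
    (P ε : ℝ) (hP : 0 < P) (hε : 0 < ε)
    (hattain : ∃ f : Fin K → Fin Nt → ℂ, power f ≤ P ∧
        (∃ q : ℝ, 0 < q ∧ q ≤ gfun a f ∧ Cq Λ D q ≤ ε) ∧
        (⨅ k, SINR h σ2 f k) = Sval h a σ2 Λ D P ε)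
    (hSpos : 0 < Sval h a σ2 Λ D P ε) :
    Pval h a σ2 Λ D (Sval h a σ2 Λ D P ε) P ε = 1 := by
  exact P_of_S_eq_one_general hK h a σ2 hσ2 Λ D hΛD P ε hP hattain hSpos

end
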